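/- Assume that every ω₁-indexed family of functions from ω to ω is eventually dominated by a single function: for every family (f_α)_{α<ω₁} in ω^ω there exists g ∈ ω^ω with f_α <* g for all α < ω₁ (this follows from MA + ¬CH). Then for every set A ⊆ ω^ω that is a union of ℵ₁-many Borel sets, either there exists a Hechler tree H with [H] ∩ A = ∅, or there exists a Laver tree L with [L] ⊆ A. -/

import Mathlib

open scoped Ordinal

/-- The restriction `x↾n` of `x : ℕ → ℕ` to its first `n` values, as a finite sequence. -/
def res (x : ℕ → ℕ) (n : ℕ) : List ℕ := List.ofFn fun i : Fin n => x i

/-- A subtree of `ω^{<ω}`: a set of finite sequences closed under initial segments. -/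
def IsSubtree (T : Set (List ℕ)) : Prop := ∀ s ∈ T, ∀ t : List ℕ, t <+: s → t ∈ T

/-- `[T]`, the set of branches of a subtree `T`. -/
def branches (T : Set (List ℕ)) : Set (ℕ → ℕ) := {x | ∀ n, res x n ∈ T}

/-- A Hechler tree: a (nonempty) subtree in which every node splits cofinitely often. -/
def IsHechler (T : Set (List ℕ)) : Prop :=
  IsSubtree T ∧ [] ∈ T ∧ ∀ s ∈ T, {n : ℕ | s ++ [n] ∉ T}.Finite

/-- A Laver tree: a (nonempty) subtree in which every node splits infinitely often. -/
def IsLaver (T : Set (List ℕ)) : Prop :=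
  IsSubtree T ∧ [] ∈ T ∧ ∀ s ∈ T, {n : ℕ | s ++ [n] ∈ T}.Infinite

/-- `f <* g`: eventual domination. -/
def EvLt (f g : ℕ → ℕ) : Prop := ∀ᶠ n in Filter.atTop, f n < g n


lemma res_len (x : ℕ → ℕ) (n : ℕ) : (res x n).length = n := by simp [res]

lemma res_succ (x : ℕ → ℕ) (n : ℕ) : res x (n + 1) = res x n ++ [x n] := by
  rw [res, List.ofFn_succ_last]
  simp [res]

lemma res_take (x : ℕ → ℕ) {m n : ℕ} (h : m ≤ n) : (res x n).take m = res x m := by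
  apply List.ext_getElem
  · simp [res, h]
  · intro i h1 h2
    simp [res]

lemma res_getD (x : ℕ → ℕ) {m n : ℕ} (h : m < n) : (res x n).getD m 0 = x m := by
  simp [res, List.getD, h]

/-- `X` is avoided by a Hechler tree with stem `s`. -/
def HNull (s : List ℕ) (X : Set (ℕ → ℕ)) : Prop :=
  ∃ h : List ℕ → ℕ, ∀ x, res x s.length = s → (∀ n, s.length ≤ n → h (res x n) ≤ x n) → x ∉ X

lemma HNull.step (s : List ℕ) (X : Set (ℕ → ℕ))
    (hfin : {n : ℕ | ¬ HNull (s ++ [n]) X}.Finite) : HNull s X := by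
  classical
  obtain ⟨b, hb⟩ := hfin.bddAbove
  have key : ∀ n, ∃ h : List ℕ → ℕ, b < n → ∀ x, res x (s ++ [n]).length = s ++ [n] →
      (∀ m, (s ++ [n]).length ≤ m → h (res x m) ≤ x m) → x ∉ X := by
    intro n
    by_cases hn : HNull (s ++ [n]) X
    · obtain ⟨h, hh⟩ := hn
      exact ⟨h, fun _ => hh⟩
    · refine ⟨fun _ => 0, fun h => ?_⟩
      have := hb hn
      omega
  choose h hh using key
  refine ⟨fun t => max (b + 1) (h (t.getD s.length 0) t), fun x hx hle => ?_⟩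
  have h1 : b < x s.length := by
    have := hle s.length le_rfl
    beta_reduce at this
    have := le_max_left (b+1) (h ((res x s.length).getD s.length 0) (res x s.length))
    omega
  refine hh (x s.length) h1 x ?_ ?_
  · simp [res_succ, hx]
  · intro m hm
    simp only [List.length_append, List.length_singleton] at hm
    have h2 := hle m (by omega)
    beta_reduce at h2
    rw [res_getD x (by omega : s.length < m)] at h2
    exact le_trans (le_max_right _ _) h2

/-- `K`-indexed families of functions are eventually dominated. -/
def Dom (K : Type*) : Prop :=
  ∀ F : K → ℕ → ℕ, ∃ g : ℕ → ℕ, ∀ a, EvLt (F a) g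

lemma Dom.list {K : Type*} (hK : Dom K) (F : K → List ℕ → ℕ) :
    ∃ g : List ℕ → ℕ, ∀ k, {s | ¬ F k s < g s}.Finite := by
  obtain ⟨g, hg⟩ := hK (fun k n => F k (Denumerable.ofNat (List ℕ) n))
  refine ⟨fun s => g (Encodable.encode s), fun k => ?_⟩
  obtain ⟨N, hN⟩ := Filter.eventually_atTop.1 (hg k)
  refine Set.Finite.subset ((Set.finite_Iio N).preimage
    (Encodable.encode_injective (α := List ℕ)).injOn) ?_
  intro s hs
  by_contra hlt
  simp only [Set.mem_preimage, Set.mem_Iio, not_lt] at hlt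
  have := hN _ hlt
  simp only [Denumerable.ofNat_encode] at this
  exact hs this

lemma HNull.union {K : Type*} (hK : Dom K) (X : K → Set (ℕ → ℕ)) (P : Set (List ℕ))
    (hP : ∀ s ∈ P, {n : ℕ | s ++ [n] ∉ P}.Finite) (hX : ∀ s ∈ P, ∀ k, HNull s (X k))
    (s : List ℕ) (hs : s ∈ P) : HNull s (⋃ k, X k) := by
  classical
  have hb : ∀ s, ∃ b : ℕ, s ∈ P → ∀ n, b ≤ n → s ++ [n] ∈ P := by
    intro s
    by_cases h : s ∈ P
    · obtain ⟨b, hb⟩ := (hP s h).bddAbove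
      refine ⟨b + 1, fun _ n hn => ?_⟩
      by_contra hc
      have := hb hc
      omega
    · exact ⟨0, fun h' => absurd h' h⟩
  choose b hb using hb
  have hh : ∀ k s, ∃ h : List ℕ → ℕ, s ∈ P → ∀ x, res x s.length = s →
      (∀ n, s.length ≤ n → h (res x n) ≤ x n) → x ∉ X k := by
    intro k s
    by_cases hs : s ∈ P
    · obtain ⟨h, hh⟩ := hX s hs k
      exact ⟨h, fun _ => hh⟩
    · exact ⟨fun _ => 0, fun h' => absurd h' hs⟩
  choose h hh using hh
  obtain ⟨g, hg⟩ := hK.list (fun k t => (Finset.range (t.length + 1)).sup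
    (fun i => h k (t.take i) t))
  refine ⟨fun t => max (g t) (b t), fun x hx hle hxm => ?_⟩
  obtain ⟨k, hk⟩ := Set.mem_iUnion.1 hxm
  have hxP : ∀ n, s.length ≤ n → res x n ∈ P := by
    intro n hn
    induction n, hn using Nat.le_induction with
    | base => rwa [hx]
    | succ n hn ih =>
      rw [res_succ]
      exact hb _ ih _ (le_trans (le_max_right _ _) (hle n hn))
  obtain ⟨M, hM⟩ := ((hg k).image List.length).bddAbove
  set m := max s.length (M + 1) with hm
  refine hh k (res x m) (hxP m (le_max_left _ _)) x (by rw [res_len]) ?_ hk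
  intro n hn
  rw [res_len] at hn
  have h1 : (Finset.range ((res x n).length + 1)).sup
      (fun i => h k ((res x n).take i) (res x n)) < g (res x n) := by
    by_contra hc
    have := hM ⟨res x n, hc, rfl⟩
    rw [res_len] at this
    have := le_max_right s.length (M + 1)
    omega
  have h2 : h k ((res x n).take m) (res x n) ≤ (Finset.range ((res x n).length + 1)).sup
      (fun i => h k ((res x n).take i) (res x n)) :=
    Finset.le_sup (f := fun i => h k ((res x n).take i) (res x n))
      (by rw [res_len]; exact Finset.mem_range.2 (by omega))
  rw [res_take x hn] at h2
  exact h2.trans (h1.le.trans ((le_max_left _ _).trans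
    (hle n (le_trans (le_max_left _ _) hn))))

/-- Witness that `s` can be driven into `Z` along infinitely splitting nodes. -/
inductive Att (Z : Set (List ℕ)) : List ℕ → Type
  | base (s : List ℕ) (h : s ∈ Z) : Att Z s
  | step (s : List ℕ) (N : Set ℕ) (hN : N.Infinite) (f : ∀ n, n ∈ N → Att Z (s ++ [n])) : Att Z s

lemma att_of_not_null {K : Type*} (hK : Dom K) (X : K → Set (ℕ → ℕ)) (s : List ℕ)
    (hs : ¬ HNull s (⋃ k, X k)) : Nonempty (Att {s | ∃ k, ¬ HNull s (X k)} s) := by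
  by_contra hc
  refine hs (HNull.union hK X {s | ¬ Nonempty (Att {s | ∃ k, ¬ HNull s (X k)} s)} ?_ ?_ s hc)
  · intro s hs
    by_contra hinf
    refine hs ⟨Att.step s _ hinf (fun n hn => Classical.choice ?_)⟩
    by_contra h'
    exact hn h'
  · intro s hs k
    by_contra h'
    exact hs ⟨Att.base s ⟨k, h'⟩⟩

/-- Cylinder. -/
def Cyl {K : Type*} (k : ℕ) (z : ℕ → K) : Set (ℕ → K) := {z' | ∀ i < k, z' i = z i}

/-- Children of a label. -/
def Child {K : Type*} (k : ℕ) (z : ℕ → K) (a : K) : ℕ → K := Function.update z k a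

lemma cyl_union {K : Type*} (f : (ℕ → K) → ℕ → ℕ) (k : ℕ) (z : ℕ → K) :
    f '' Cyl k z = ⋃ a, f '' Cyl (k+1) (Child k z a) := by
  rw [← Set.image_iUnion]
  congr 1
  ext z'
  simp only [Cyl, Child, Set.mem_ofPred_eq, Set.mem_iUnion]
  constructor
  · intro h
    refine ⟨z' k, fun i hi => ?_⟩
    by_cases hik : i = k
    · subst hik; simp
    · rw [Function.update_of_ne hik]; exact h i (by omega)
  · rintro ⟨a, h⟩ i hi
    rw [h i (by omega), Function.update_of_ne (by omega)]

/-- Nodes at which some child is not null. -/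
def ZZ {K : Type*} (f : (ℕ → K) → ℕ → ℕ) (k : ℕ) (z : ℕ → K) : Set (List ℕ) :=
  {s | ∃ a, ¬ HNull s (f '' Cyl (k+1) (Child k z a))}

/-- States of the construction at node `s`. -/
structure St {K : Type*} (f : (ℕ → K) → ℕ → ℕ) where
  s : List ℕ
  k : ℕ
  z : ℕ → K
  w : Att (ZZ f k z) s

section construction

variable {K : Type*} (f : (ℕ → K) → ℕ → ℕ)
  (hatt : ∀ k z s, ¬ HNull s (f '' Cyl k z) → Nonempty (Att (ZZ f k z) s))

open Classical in
/-- The transition function, by cases on the witness. -/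
noncomputable def nextAux (n k : ℕ) (z : ℕ → K) (s : List ℕ) (w : Att (ZZ f k z) s) :
    Option (St f) :=
  match w with
  | Att.base s h =>
      if h' : ¬ HNull (s ++ [n]) (f '' Cyl (k+1) (Child k z h.choose)) then
        some ⟨s ++ [n], k + 1, Child k z h.choose, Classical.choice (hatt _ _ _ h')⟩
      else none
  | Att.step s N _ g =>
      if h' : n ∈ N then some ⟨s ++ [n], k, z, g n h'⟩ else none

/-- The transition function. -/
noncomputable def next (q : St f) (n : ℕ) : Option (St f) := nextAux f hatt n q.k q.z q.s q.w

lemma next_inf (q : St f) : {n : ℕ | (next f hatt q n).isSome}.Infinite := by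
  obtain ⟨s, k, z, w⟩ := q
  cases w with
  | base _ h =>
    have : ¬ {n : ℕ | ¬ HNull (s ++ [n]) (f '' Cyl (k+1) (Child k z h.choose))}.Finite :=
      fun hf => h.choose_spec (HNull.step _ _ hf)
    refine Set.Infinite.mono ?_ this
    intro n hn
    have hn' : ¬ HNull (s ++ [n]) (f '' Cyl (k+1) (Child k z h.choose)) := hn
    simp [next, nextAux, hn']
  | step _ N hN g =>
    refine Set.Infinite.mono ?_ hN
    intro n hn
    simp [next, nextAux, hn]

lemma next_spec (q q' : St f) (n : ℕ) (h : next f hatt q n = some q') :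
    q'.s = q.s ++ [n] ∧ q.k ≤ q'.k ∧ ∀ i < q.k, q'.z i = q.z i := by
  obtain ⟨s, k, z, w⟩ := q
  cases w with
  | base _ hs =>
    by_cases hn : ¬ HNull (s ++ [n]) (f '' Cyl (k+1) (Child k z hs.choose))
    · simp only [next, nextAux, dif_pos hn, Option.some.injEq] at h
      subst h
      refine ⟨rfl, Nat.le_succ _, fun i hi => ?_⟩
      simp only at hi ⊢
      exact Function.update_of_ne (by omega) _ _
    · simp [next, nextAux, dif_neg hn] at h
  | step _ N hN g =>
    by_cases hn : n ∈ N
    · simp only [next, nextAux, dif_pos hn, Option.some.injEq] at h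
      subst h
      exact ⟨rfl, le_rfl, fun _ _ => rfl⟩
    · simp [next, nextAux, hn] at h

lemma exists_base (x : ℕ → ℕ) (q : ℕ → St f)
    (hq : ∀ n, next f hatt (q n) (x n) = some (q (n+1))) (k : ℕ) (z : ℕ → K) (s : List ℕ)
    (w : Att (ZZ f k z) s) : ∀ n, q n = ⟨s, k, z, w⟩ →
    ∃ m, n ≤ m ∧ (q m).s ∈ ZZ f (q m).k (q m).z ∧ (q m).k < (q (m+1)).k := by
  induction w with
  | base s hs =>
    intro n hn
    refine ⟨n, le_rfl, by rw [hn]; exact hs, ?_⟩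
    have h := hq n
    rw [hn] at h
    by_cases hc : ¬ HNull (s ++ [x n]) (f '' Cyl (k+1) (Child k z hs.choose))
    · simp only [next, nextAux, dif_pos hc, Option.some.injEq] at h
      rw [hn, ← h]
      exact Nat.lt_succ_self _
    · simp [next, nextAux, dif_neg hc] at h
  | step s N hN g ih =>
    intro n hn
    have h := hq n
    rw [hn] at h
    by_cases hc : x n ∈ N
    · simp only [next, nextAux, dif_pos hc, Option.some.injEq] at h
      obtain ⟨m, hm, h2⟩ := ih (x n) hc (n+1) h.symm
      exact ⟨m, by omega, h2⟩
    · simp [next, nextAux, hc] at h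

/-- Run the transition function along a finite sequence. -/
noncomputable def run (q₀ : St f) (s : List ℕ) : Option (St f) :=
  s.foldl (fun o n => o.bind (fun q => next f hatt q n)) (some q₀)

lemma run_concat (q₀ : St f) (s : List ℕ) (n : ℕ) :
    run f hatt q₀ (s ++ [n]) = (run f hatt q₀ s).bind (fun q => next f hatt q n) := by
  simp [run]

lemma run_prefix (q₀ : St f) (t u : List ℕ) (h : (run f hatt q₀ (t ++ u)).isSome) :
    (run f hatt q₀ t).isSome := by
  induction u using List.reverseRecOn with
  | nil => simpa using h
  | append_singleton u n ih =>
    apply ih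
    rw [← List.append_assoc, run_concat] at h
    cases h' : run f hatt q₀ (t ++ u) with
    | none => rw [h'] at h; simp at h
    | some _ => rfl

lemma laver_run (q₀ : St f) : IsLaver {s | (run f hatt q₀ s).isSome} := by
  refine ⟨?_, by simp [run], ?_⟩
  · rintro s hs t ⟨u, rfl⟩
    exact run_prefix f hatt q₀ t u hs
  · intro s hs
    obtain ⟨q, hq⟩ := Option.isSome_iff_exists.1 hs
    refine (next_inf f hatt q).mono ?_
    intro n hn
    have hn' : (next f hatt q n).isSome := hn
    simpa [run_concat, hq] using hn'

lemma branches_run (hf : ∀ z i, ∃ k : ℕ, ∀ z', (∀ j < k, z' j = z j) → f z' i = f z i)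
    (q₀ : St f) (hq₀ : q₀.s = []) :
    branches {s | (run f hatt q₀ s).isSome} ⊆ Set.range f := by
  intro x hx
  have hx' : ∀ n, ∃ q, run f hatt q₀ (res x n) = some q := fun n =>
    Option.isSome_iff_exists.1 (hx n)
  choose q hqr using hx'
  have hq : ∀ n, next f hatt (q n) (x n) = some (q (n+1)) := by
    intro n
    have := hqr (n+1)
    rw [res_succ, run_concat, hqr n] at this
    exact this
  have hs : ∀ n, (q n).s = res x n := by
    intro n
    induction n with
    | zero =>
      have h0 : some q₀ = some (q 0) := hqr 0
      rw [← Option.some.inj h0, hq₀]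
      simp [res]
    | succ n ih => rw [(next_spec f hatt _ _ _ (hq n)).1, ih, res_succ]
  have hmono : Monotone (fun n => (q n).k) :=
    monotone_nat_of_le_succ fun n => (next_spec f hatt _ _ _ (hq n)).2.1
  have hagree : ∀ n m, n ≤ m → ∀ i < (q n).k, (q m).z i = (q n).z i := by
    intro n m hnm i hi
    induction m, hnm using Nat.le_induction with
    | base => rfl
    | succ m hm ih =>
      rw [(next_spec f hatt _ _ _ (hq m)).2.2 i (lt_of_lt_of_le hi (hmono hm)), ih]
  have hbase : ∀ n, ∃ m, n ≤ m ∧ (q m).s ∈ ZZ f (q m).k (q m).z ∧ (q m).k < (q (m+1)).k :=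
    fun n => exists_base f hatt x q hq _ _ _ (q n).w n rfl
  have hunb : ∀ i, ∃ n, i < (q n).k := by
    intro i
    induction i with
    | zero =>
      obtain ⟨m, _, _, h⟩ := hbase 0
      exact ⟨m+1, by omega⟩
    | succ i ih =>
      obtain ⟨n, hn⟩ := ih
      obtain ⟨m, hm, _, h⟩ := hbase n
      have h3 : (q n).k ≤ (q m).k := hmono hm
      exact ⟨m+1, by omega⟩
  choose N hN using hunb
  have hz : ∀ n, ∀ i < (q n).k, (q n).z i = (q (N i)).z i := by
    intro n i hi
    rw [← hagree n (max n (N i)) (le_max_left _ _) i hi,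
      ← hagree (N i) (max n (N i)) (le_max_right _ _) i (hN i)]
  refine ⟨fun i => (q (N i)).z i, ?_⟩
  ext i
  obtain ⟨k0, hk0⟩ := hf (fun i => (q (N i)).z i) i
  obtain ⟨m, hm, ⟨a, ha⟩, _⟩ := hbase (max (N k0) (i+1))
  have : ∃ z' ∈ Cyl ((q m).k + 1) (Child (q m).k (q m).z a), res (f z') (q m).s.length = (q m).s := by
    by_contra hc
    push Not at hc
    refine ha ⟨fun _ => 0, ?_⟩
    rintro y hy - ⟨z', hz', rfl⟩
    exact hc z' hz' hy
  obtain ⟨z', hz', hr⟩ := this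
  rw [hs m, res_len] at hr
  have h1 := le_max_left (N k0) (i+1)
  have h2 := le_max_right (N k0) (i+1)
  have h3 : (q (N k0)).k ≤ (q m).k := hmono (h1.trans hm)
  have h4 := hN k0
  rw [← hk0 z' ?_, ← res_getD (f z') (show i < m by omega), hr, res_getD x (by omega)]
  intro j hj
  rw [hz' j (by omega), Child, Function.update_of_ne (by omega)]
  exact hz m j (by omega)

end construction

lemma hechler_of_null (A : Set (ℕ → ℕ)) (h : HNull [] A) :
    ∃ H : Set (List ℕ), IsHechler H ∧ branches H ∩ A = ∅ := by
  obtain ⟨h, hh⟩ := h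
  refine ⟨{t | ∀ u n, (u ++ [n]) <+: t → h u ≤ n}, ⟨?_, ?_, ?_⟩, ?_⟩
  · intro s hs t hts u n hu
    exact hs u n (hu.trans hts)
  · intro u n hu
    simp at hu
  · intro s hs
    refine (Set.finite_Iio (h s)).subset ?_
    intro n hn
    by_contra hc
    refine hn ?_
    intro u m hu
    rw [List.prefix_concat_iff] at hu
    rcases hu with hu | hu
    · have := List.append_inj' hu rfl
      simp only [List.cons.injEq, and_true] at this
      rw [this.1, this.2]
      simpa using hc
    · exact hs u m hu
  · ext x
    simp only [Set.mem_inter_iff, Set.mem_empty_iff_false, iff_false, not_and]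
    intro hx
    refine hh x (by simp [res]) ?_
    intro n _
    have := hx (n+1)
    exact this (res x n) (x n) (by rw [res_succ])

theorem dichotomy_range {K : Type*} [Nonempty K] (hK : Dom K) (f : (ℕ → K) → ℕ → ℕ)
    (hf : ∀ z i, ∃ k : ℕ, ∀ z', (∀ j < k, z' j = z j) → f z' i = f z i) :
    (∃ H : Set (List ℕ), IsHechler H ∧ branches H ∩ Set.range f = ∅) ∨
    (∃ L : Set (List ℕ), IsLaver L ∧ branches L ⊆ Set.range f) := by
  by_cases h : HNull [] (Set.range f)
  · exact Or.inl (hechler_of_null _ h)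
  · right
    have hatt : ∀ k z s, ¬ HNull s (f '' Cyl k z) → Nonempty (Att (ZZ f k z) s) := by
      intro k z s hs
      rw [cyl_union] at hs
      exact att_of_not_null hK _ s hs
    let z : ℕ → K := fun _ => Classical.arbitrary K
    have h0 : f '' Cyl 0 z = Set.range f := by
      rw [← Set.image_univ]
      congr 1
      ext
      simp [Cyl]
    rw [← h0] at h
    obtain ⟨w⟩ := hatt _ _ _ h
    exact ⟨_, laver_run f hatt ⟨[], 0, z, w⟩, branches_run f hatt hf _ rfl⟩

lemma cont_mod (f : (ℕ → ℕ) → ℕ → ℕ) (hf : Continuous f) (y : ℕ → ℕ) (i : ℕ) :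
    ∃ k : ℕ, ∀ y', (∀ j < k, y' j = y j) → f y' i = f y i := by
  have ho : IsOpen {y' | f y' i = f y i} :=
    (isOpen_discrete {f y i}).preimage ((continuous_apply i).comp hf)
  obtain ⟨v, ⟨x, k, rfl⟩, hy, hv⟩ :=
    (PiNat.isTopologicalBasis_cylinders (fun _ : ℕ => ℕ)).exists_subset_of_mem_open
      (show y ∈ _ from (rfl : f y i = f y i)) ho
  refine ⟨k, fun y' hy' => hv ?_⟩
  rw [PiNat.mem_cylinder_iff] at hy ⊢
  intro j hj
  rw [hy' j hj, hy j hj]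

universe u v

lemma card_lt_omega1 : Cardinal.mk {o : Ordinal.{u} // o < ω₁} = Cardinal.aleph 1 := by
  have := Cardinal.mk_Iio_ordinal (ω₁ : Ordinal.{u})
  rw [Ordinal.card_omega, Cardinal.lift_aleph, Ordinal.lift_one] at this
  exact this

lemma dom_of_hdom (hdom : ∀ f : {o : Ordinal.{u} // o < ω₁} → ℕ → ℕ,
      ∃ g : ℕ → ℕ, ∀ a : {o : Ordinal // o < ω₁}, EvLt (f a) g)
    (K : Type v) (hK : Cardinal.mk K ≤ Cardinal.aleph 1) : Dom K := by
  have : Nonempty (K ↪ {o : Ordinal.{u} // o < ω₁}) := by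
    rw [← Cardinal.lift_mk_le', card_lt_omega1, Cardinal.lift_aleph, Ordinal.lift_one]
    have := Cardinal.lift_le.{u+1}.2 hK
    rwa [Cardinal.lift_aleph, Ordinal.lift_one] at this
  obtain ⟨e⟩ := this
  intro F
  rcases isEmpty_or_nonempty K with hE | hE
  · exact ⟨fun _ => 0, fun a => hE.elim a⟩
  obtain ⟨g, hg⟩ := hdom (fun o => F (Function.invFun e o))
  refine ⟨g, fun a => ?_⟩
  have := hg (e a)
  rwa [Function.leftInverse_invFun e.injective a] at this

theorem hechler_laver_dichotomy_of_dominating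
    (hdom : ∀ f : {o : Ordinal // o < ω₁} → ℕ → ℕ,
      ∃ g : ℕ → ℕ, ∀ a : {o : Ordinal // o < ω₁}, EvLt (f a) g)
    (A : Set (ℕ → ℕ)) (B : {o : Ordinal // o < ω₁} → Set (ℕ → ℕ))
    (hB : ∀ a, MeasurableSet (B a)) (hA : A = ⋃ a, B a) :
    (∃ H : Set (List ℕ), IsHechler H ∧ branches H ∩ A = ∅) ∨
    (∃ L : Set (List ℕ), IsLaver L ∧ branches L ⊆ A) := by
  classical
  have han : ∀ a : {a // (B a).Nonempty}, ∃ f : (ℕ → ℕ) → ℕ → ℕ,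
      Continuous f ∧ Set.range f = B a.1 := by
    rintro ⟨a, ha⟩
    have h := (hB a).analyticSet
    rw [MeasureTheory.AnalyticSet] at h
    rcases h with h | h
    · exact absurd h ha.ne_empty
    · exact h
  choose F hFc hFr using han
  rcases isEmpty_or_nonempty {a // (B a).Nonempty} with hE | hE
  · left
    refine hechler_of_null A ⟨fun _ => 0, fun x _ _ hx => ?_⟩
    rw [hA] at hx
    obtain ⟨a, ha⟩ := Set.mem_iUnion.1 hx
    exact hE.elim ⟨a, x, ha⟩
  have hK : Dom ({a // (B a).Nonempty} × ℕ) := by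
    apply dom_of_hdom hdom
    rw [Cardinal.mk_prod]
    have h1 : Cardinal.mk {a // (B a).Nonempty} ≤ Cardinal.aleph 1 :=
      (Cardinal.mk_subtype_le _).trans card_lt_omega1.le
    rw [Cardinal.lift_id', Cardinal.mk_nat, Cardinal.lift_aleph0]
    exact Cardinal.mul_le_of_le (Cardinal.aleph0_le_aleph 1) h1 (Cardinal.aleph0_le_aleph 1)
  let f : (ℕ → {a // (B a).Nonempty} × ℕ) → ℕ → ℕ := fun z => F (z 0).1 (fun n => (z n).2)
  have hf : ∀ z i, ∃ k : ℕ, ∀ z', (∀ j < k, z' j = z j) → f z' i = f z i := by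
    intro z i
    obtain ⟨k, hk⟩ := cont_mod (F (z 0).1) (hFc _) (fun n => (z n).2) i
    refine ⟨k + 1, fun z' hz' => ?_⟩
    simp only [f]
    rw [hz' 0 (by omega)]
    exact hk _ (fun j hj => by simp only [hz' j (by omega)])
  have hr : Set.range f = A := by
    rw [hA]
    ext x
    rw [Set.mem_iUnion]
    constructor
    · rintro ⟨z, rfl⟩
      refine ⟨(z 0).1.1, ?_⟩
      rw [← hFr]
      exact ⟨_, rfl⟩
    · rintro ⟨a, ha⟩
      have hx : x ∈ Set.range (F ⟨a, x, ha⟩) := by rw [hFr]; exact ha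
      obtain ⟨y, hy⟩ := hx
      exact ⟨fun n => (⟨a, x, ha⟩, y n), hy⟩
  rw [← hr]
  exact dichotomy_range hK f hf
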